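/- Let m ≥ 2 and let w be a freely reduced word over A = {x_1, x_2, x_1^{-1}, x_2^{-1}} with 0 < p(w) < m and 0 < n(w) < m. Then there is a finite sequence of words w = w_0, w_1, ..., w_t, each obtained from the previous one by an unsigned length reducing τ-move (so in particular each w_i is freely reduced and represents the same element of DA(m) as w), such that w_t is a geodesic word. -/

import Mathlib

namespace ArtinRD

/-- The alternating product `xyxy...` with `m` factors, starting with `x`. -/
def altProd {G : Type*} [Monoid G] : ℕ → G → G → G
  | 0, _, _ => 1
  | n + 1, x, y => x * altProd n y x

/-- The Artin relators determined by a Coxeter-type matrix `M` (`⊤` meaning `∞`). -/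
def artinRels (n : ℕ) (M : Fin n → Fin n → ℕ∞) : Set (FreeGroup (Fin n)) :=
  {r | ∃ i j : Fin n, i ≠ j ∧ ∃ m : ℕ, M i j = (m : ℕ∞) ∧
    r = altProd m (FreeGroup.of i) (FreeGroup.of j) *
        (altProd m (FreeGroup.of j) (FreeGroup.of i))⁻¹}

/-- The Artin group associated to the matrix `M`. -/
abbrev ArtinGroup (n : ℕ) (M : Fin n → Fin n → ℕ∞) : Type := PresentedGroup (artinRels n M)

/-- The standard generator `x_i` of the Artin group. -/
def gen (n : ℕ) (M : Fin n → Fin n → ℕ∞) (i : Fin n) : ArtinGroup n M := PresentedGroup.of i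

/-- The set `A = {x_1^{±1}, ..., x_n^{±1}}` of standard letters. -/
def genSet (n : ℕ) (M : Fin n → Fin n → ℕ∞) : Set (ArtinGroup n M) :=
  {g | ∃ i : Fin n, g = gen n M i ∨ g = (gen n M i)⁻¹}

/-- Word length of `g` with respect to a set `S`: the least `N` such that `g` is a
product of `N` elements of `S`. -/
noncomputable def wordLength {G : Type*} [Group G] (S : Set G) (g : G) : ℕ :=
  sInf {N : ℕ | ∃ w : List G, (∀ a ∈ w, a ∈ S) ∧ w.length = N ∧ w.prod = g}

/-- The word length on an Artin group with respect to the standard letters. -/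
noncomputable def ℓA (n : ℕ) (M : Fin n → Fin n → ℕ∞) : ArtinGroup n M → ℕ :=
  wordLength (genSet n M)

/-- The Coxeter matrix of the dihedral Artin group `DA(m)`. -/
def DMat (m : ℕ) : Fin 2 → Fin 2 → ℕ∞ := fun i j => if i = j then 1 else (m : ℕ∞)

/-- The dihedral Artin group `DA(m)`. -/
abbrev DA (m : ℕ) : Type := ArtinGroup 2 (DMat m)

/-- A letter of `DA(m)`: a generator index with a sign (`true` = positive). -/
abbrev L2 := Fin 2 × Bool

/-- The inverse letter. -/
def linv (l : L2) : L2 := (l.1, !l.2)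

/-- The permutation `δ` of the letters induced by conjugation by `Δ`:
the identity if `m` is even, the swap of the two names if `m` is odd. -/
def dmap (m : ℕ) (l : L2) : L2 := if m % 2 = 0 then l else (l.1 + 1, l.2)

/-- The alternating word `ᵣ(a,b) = abab...` of length `r` starting with `a`. -/
def altL : ℕ → L2 → L2 → List L2
  | 0, _, _ => []
  | n + 1, a, b => a :: altL n b a

/-- The alternating word `(b,a)ᵣ = ...abab` of length `r` ending with `a`. -/
def altE (r : ℕ) (a b : L2) : List L2 := (altL r a b).reverse

/-- A word is freely reduced if no letter is followed by its inverse. -/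
def Reduced (w : List L2) : Prop := List.Chain' (fun p q => q ≠ linv p) w

/-- A positive alternating word: all letters positive, with alternating names. -/
def PosAlt (u : List L2) : Prop :=
  (∀ l ∈ u, l.2 = true) ∧ List.Chain' (fun p q => p.1 ≠ q.1) u

/-- A negative alternating word: all letters negative, with alternating names. -/
def NegAlt (u : List L2) : Prop :=
  (∀ l ∈ u, l.2 = false) ∧ List.Chain' (fun p q => p.1 ≠ q.1) u

/-- The group element of `DA(m)` corresponding to a letter. -/
def toGen2 (m : ℕ) (l : L2) : DA m :=
  if l.2 then gen 2 (DMat m) l.1 else (gen 2 (DMat m) l.1)⁻¹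

/-- The element of `DA(m)` represented by a word. -/
def wElt (m : ℕ) (w : List L2) : DA m := (w.map (toGen2 m)).prod

/-- A word is geodesic if its length equals the word length of the element
it represents. -/
def Geo (m : ℕ) (w : List L2) : Prop :=
  wordLength (genSet 2 (DMat m)) (wElt m w) = w.length

/-- An unsigned length-reducing `τ`-move: replacement of an over-critical subword
`ₚ(x,y) ξ (z⁻¹,t⁻¹)ₙ` by `ₘ₋ₚ(y⁻¹,x⁻¹) δ(ξ) (t,z)ₘ₋ₙ` (or the mirror form), where
`0 < p, n < m`, `p + n > m`, `{x,y} = {z,t} = {x₁,x₂}`, and the displayed alternating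
subwords are maximal alternating subwords of `w` of their signs. -/
def UMove (m : ℕ) (w w' : List L2) : Prop :=
  (∃ (α β ξ : List L2) (p nn : ℕ) (x y z t : L2),
    x.2 = true ∧ y.2 = true ∧ z.2 = true ∧ t.2 = true ∧
    x.1 ≠ y.1 ∧ z.1 ≠ t.1 ∧
    0 < p ∧ p < m ∧ 0 < nn ∧ nn < m ∧ m < p + nn ∧
    w = α ++ altL p x y ++ ξ ++ altE nn (linv t) (linv z) ++ β ∧
    w' = α ++ altL (m - p) (linv y) (linv x) ++ ξ.map (dmap m) ++ altE (m - nn) z t ++ β ∧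
    (∀ c, α.getLast? = some c → ¬(c.2 = true ∧ c.1 ≠ x.1)) ∧
    (∀ c d, (ξ ++ altE nn (linv t) (linv z) ++ β).head? = some c →
        (altL p x y).getLast? = some d → ¬(c.2 = true ∧ c.1 ≠ d.1)) ∧
    (∀ c d, (α ++ altL p x y ++ ξ).getLast? = some c →
        (altE nn (linv t) (linv z)).head? = some d → ¬(c.2 = false ∧ c.1 ≠ d.1)) ∧
    (∀ c, β.head? = some c → ¬(c.2 = false ∧ c.1 ≠ t.1)))
  ∨
  (∃ (α β ξ : List L2) (p nn : ℕ) (x y z t : L2),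
    x.2 = true ∧ y.2 = true ∧ z.2 = true ∧ t.2 = true ∧
    x.1 ≠ y.1 ∧ z.1 ≠ t.1 ∧
    0 < p ∧ p < m ∧ 0 < nn ∧ nn < m ∧ m < p + nn ∧
    w = α ++ altL nn (linv x) (linv y) ++ ξ ++ altE p t z ++ β ∧
    w' = α ++ altL (m - nn) y x ++ ξ.map (dmap m) ++ altE (m - p) (linv z) (linv t) ++ β ∧
    (∀ c, α.getLast? = some c → ¬(c.2 = false ∧ c.1 ≠ x.1)) ∧
    (∀ c d, (ξ ++ altE p t z ++ β).head? = some c →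
        (altL nn (linv x) (linv y)).getLast? = some d → ¬(c.2 = false ∧ c.1 ≠ d.1)) ∧
    (∀ c d, (α ++ altL nn (linv x) (linv y) ++ ξ).getLast? = some c →
        (altE p t z).head? = some d → ¬(c.2 = true ∧ c.1 ≠ d.1)) ∧
    (∀ c, β.head? = some c → ¬(c.2 = true ∧ c.1 ≠ t.1)))


/-! ### The action -/
abbrev St (M : ℕ) := ℤ × Option (Fin 2 × Fin (M+1) × List (Fin (M+1)))

def mk {M : ℕ} (e : Fin 2) : List (Fin (M+1)) → Option (Fin 2 × Fin (M+1) × List (Fin (M+1)))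
  | [] => none
  | j :: L => some (e, j, L)

def X {M : ℕ} (i : Fin 2) : St M → St M
  | (k, none) => (k, some (i, 0, []))
  | (k, some (e, j, L)) => if e = i then (k, some (i, 0, j :: L)) else
      if j = Fin.last M then (k + 1, mk e L) else (k, some (i, j + 1, L))

def Y {M : ℕ} (i : Fin 2) : St M → St M
  | (k, none) => (k - 1, some (i + 1, Fin.last M, []))
  | (k, some (e, j, L)) => if e = i then
      if j = 0 then (k, mk i L) else (k, some (i + 1, j - 1, L))
      else (k - 1, some (e, Fin.last M, j :: L))

lemma f2_ne {i e : Fin 2} (h : e ≠ i) : e = i + 1 := by revert i e; decide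
lemma f2_ne' (i : Fin 2) : i + 1 ≠ i := by revert i; decide
lemma f2_two (i : Fin 2) : i + 1 + 1 = i := by revert i; decide

lemma X_mk_same {M : ℕ} (i : Fin 2) (k : ℤ) (L : List (Fin (M+1))) :
    X i (k, mk i L) = (k, mk i (0 :: L)) := by
  cases L <;> simp [X, mk]

lemma X_mk_last {M : ℕ} (i : Fin 2) (k : ℤ) (L : List (Fin (M+1))) :
    X i (k, mk (i+1) (Fin.last M :: L)) = (k + 1, mk (i+1) L) := by
  simp [X, mk, f2_ne']

lemma X_mk_inc {M : ℕ} (i : Fin 2) (k : ℤ) (j : Fin (M+1)) (hj : j ≠ Fin.last M)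
    (L : List (Fin (M+1))) :
    X i (k, mk (i+1) (j :: L)) = (k, mk i ((j + 1) :: L)) := by
  simp [X, mk, f2_ne', hj]

lemma Y_mk_ne {M : ℕ} (i : Fin 2) (k : ℤ) (L : List (Fin (M+1))) :
    Y i (k, mk (i+1) L) = (k - 1, mk (i+1) (Fin.last M :: L)) := by
  cases L <;> simp [Y, mk, f2_ne']

lemma Y_mk_zero {M : ℕ} (i : Fin 2) (k : ℤ) (L : List (Fin (M+1))) :
    Y i (k, mk i (0 :: L)) = (k, mk i L) := by
  simp [Y, mk]

lemma Y_mk_dec {M : ℕ} (i : Fin 2) (k : ℤ) (j : Fin (M+1)) (hj : j ≠ 0)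
    (L : List (Fin (M+1))) :
    Y i (k, mk i (j :: L)) = (k, mk (i+1) ((j - 1) :: L)) := by
  simp [Y, mk, hj]

/-- Every state, seen from a letter `i`. -/
lemma st_casesX {M : ℕ} (i : Fin 2) (s : St M) :
    (∃ k L, s = (k, mk i L)) ∨ (∃ k L, s = (k, mk (i+1) (Fin.last M :: L))) ∨
    (∃ k j L, j ≠ Fin.last M ∧ s = (k, mk (i+1) (j :: L))) := by
  rcases s with ⟨k, _ | ⟨e, j, L⟩⟩
  · exact Or.inl ⟨k, [], rfl⟩
  · by_cases h : e = i
    · subst h; exact Or.inl ⟨k, j :: L, rfl⟩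
    · have := f2_ne h
      subst this
      by_cases hj : j = Fin.last M
      · subst hj; exact Or.inr (Or.inl ⟨k, L, rfl⟩)
      · exact Or.inr (Or.inr ⟨k, j, L, hj, rfl⟩)

lemma st_casesY {M : ℕ} (i : Fin 2) (s : St M) :
    (∃ k L, s = (k, mk (i+1) L)) ∨ (∃ k L, s = (k, mk i (0 :: L))) ∨
    (∃ k j L, j ≠ 0 ∧ s = (k, mk i (j :: L))) := by
  rcases s with ⟨k, _ | ⟨e, j, L⟩⟩
  · exact Or.inl ⟨k, [], rfl⟩
  · by_cases h : e = i
    · subst h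
      by_cases hj : j = 0
      · subst hj; exact Or.inr (Or.inl ⟨k, L, rfl⟩)
      · exact Or.inr (Or.inr ⟨k, j, L, hj, rfl⟩)
    · have := f2_ne h
      subst this
      exact Or.inl ⟨k, j :: L, rfl⟩

lemma fin_ne_last {M : ℕ} {j : Fin (M+1)} (h : j ≠ Fin.last M) : (j : ℕ) < M := by
  have := j.2
  have h2 : (j : ℕ) ≠ M := fun h' => h (Fin.ext (by simpa using h'))
  omega

lemma fin_ne_zero {M : ℕ} {j : Fin (M+1)} (h : j ≠ 0) : 0 < (j : ℕ) := by
  have h2 : (j : ℕ) ≠ 0 := fun h' => h (Fin.ext (by simpa using h'))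
  omega

lemma fin_add_val {M : ℕ} {j : Fin (M+1)} (h : j ≠ Fin.last M) :
    ((j + 1 : Fin (M+1)) : ℕ) = j + 1 := Fin.val_add_one_of_lt (Fin.lt_last_iff_ne_last.2 h)

lemma fin_sub_val {M : ℕ} {j : Fin (M+1)} (h : j ≠ 0) :
    ((j - 1 : Fin (M+1)) : ℕ) = j - 1 := Fin.val_sub_one_of_ne_zero h

lemma YX {M : ℕ} (i : Fin 2) (s : St M) : Y i (X i s) = s := by
  rcases st_casesX i s with ⟨k, L, rfl⟩ | ⟨k, L, rfl⟩ | ⟨k, j, L, hj, rfl⟩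
  · rw [X_mk_same, Y_mk_zero]
  · rw [X_mk_last, Y_mk_ne]; simp
  · rw [X_mk_inc _ _ _ hj, Y_mk_dec]
    · simp
    · intro h
      have := congrArg Fin.val h
      rw [fin_add_val hj] at this
      simp at this

lemma XY {M : ℕ} (i : Fin 2) (s : St M) : X i (Y i s) = s := by
  rcases st_casesY i s with ⟨k, L, rfl⟩ | ⟨k, L, rfl⟩ | ⟨k, j, L, hj, rfl⟩
  · rw [Y_mk_ne, X_mk_last]; simp
  · rw [Y_mk_zero, X_mk_same]
  · rw [Y_mk_dec _ _ _ hj, X_mk_inc]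
    · simp
    · intro h
      have := congrArg Fin.val h
      rw [fin_sub_val hj] at this
      have := j.2
      have := fin_ne_zero hj
      simp at *
      omega

def XP (M : ℕ) (i : Fin 2) : Equiv.Perm (St M) where
  toFun := X i
  invFun := Y i
  left_inv := YX i
  right_inv := XY i

/-- Apply an alternating sequence of `n` generators, the last one being `i`. -/
def iter {M : ℕ} : ℕ → Fin 2 → St M → St M
  | 0, _, s => s
  | n + 1, i, s => X i (iter n (i + 1) s)

def tg : ℕ → Fin 2 → Fin 2
  | 0, i => i
  | n + 1, i => tg n (i + 1)

lemma tg_succ (n : ℕ) (i : Fin 2) : tg n (i + 1) = tg n i + 1 := by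
  induction n generalizing i with
  | zero => rfl
  | succ n ih => simp only [tg]; rw [ih]

lemma tg_tg (n : ℕ) (i : Fin 2) : tg n (tg n i) = i := by
  induction n generalizing i with
  | zero => rfl
  | succ n ih => simp only [tg]; rw [tg_succ, tg_succ, tg_succ, ih, f2_two]

lemma tg_add (a b : ℕ) (i : Fin 2) : tg (a + b) i = tg b (tg a i) := by
  induction a generalizing i with
  | zero => simp [tg]
  | succ n ih => rw [Nat.succ_add]; simp only [tg]; exact ih _

lemma iter_add {M : ℕ} (a b : ℕ) (i : Fin 2) (s : St M) :
    iter (a + b) i s = iter a i (iter b (tg a i) s) := by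
  induction a generalizing i with
  | zero => simp [iter, tg]
  | succ n ih => rw [Nat.succ_add]; simp only [iter, tg]; rw [ih]

lemma iter_inc {M : ℕ} (n : ℕ) (i : Fin 2) (k : ℤ) (j : ℕ) (hj : j + n < M + 1)
    (L : List (Fin (M+1))) :
    iter n i (k, mk (tg n i) (⟨j, by omega⟩ :: L)) = (k, mk i (⟨j + n, hj⟩ :: L)) := by
  induction n generalizing i with
  | zero => rfl
  | succ n ih =>
    simp only [iter, tg]
    rw [ih (i+1) (by omega), X_mk_inc]
    · congr 3
      apply Fin.ext
      rw [fin_add_val]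
      · simp; omega
      · intro h; have := congrArg Fin.val h; simp at this; omega
    · intro h; have := congrArg Fin.val h; simp at this; omega

lemma iter_push {M : ℕ} (n : ℕ) (i : Fin 2) (k : ℤ) (hn : n < M + 1) (L : List (Fin (M+1))) :
    iter (n + 1) i (k, mk (tg n i) L) = (k, mk i (⟨n, hn⟩ :: L)) := by
  rw [iter_add]
  have : iter 1 (tg n i) ((k, mk (tg n i) L) : St M) = (k, mk (tg n i) (⟨0, by omega⟩ :: L)) := by
    simp only [iter]; rw [X_mk_same]; rfl
  rw [this, iter_inc n i k 0 (by omega)]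
  simp

lemma iter_full {M : ℕ} (i : Fin 2) (k : ℤ) (e : Fin 2) (L : List (Fin (M+1))) :
    iter (M + 2) i (k, mk e L) = (k + 1, mk (tg M e) L) := by
  have key1 : ∀ L : List (Fin (M+1)), iter (M + 2) i (k, mk (tg (M+1) i) L) = (k + 1, mk (i+1) L) := by
    intro L
    rw [iter]
    have := iter_push (M := M) M (i+1) k (by omega) L
    simp only [tg]
    rw [this]
    exact X_mk_last _ _ _
  by_cases h : e = tg (M+1) i
  · rw [h, key1]
    simp only [tg]; rw [tg_tg]
  · have h2 := f2_ne h
    have h3 : e = tg M i := by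
      rw [h2]; simp only [tg]; rw [tg_succ, f2_two]
    cases L with
    | nil => 
      have := key1 []
      simpa [mk] using this
    | cons j L =>
      rw [h3, tg_tg]
      obtain ⟨j, hj⟩ := j
      have e1 : M + 2 = (j + 1) + (1 + (M - j)) := by omega
      rw [e1, iter_add (j+1) (1 + (M - j)), iter_add 1 (M - j)]
      have e2 : tg M i = tg (M - j) (tg 1 (tg (j+1) i)) := by
        rw [← tg_add, ← tg_add]
        have : j + 1 + (1 + (M - j)) = M + 1 + 1 := by omega
        rw [this, tg_add, tg_add]
        simp [tg, f2_two]
      rw [e2, iter_inc (M - j) _ _ j (by omega)]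
      have e3 : (⟨j + (M - j), by omega⟩ : Fin (M+1)) = Fin.last M := by
        apply Fin.ext; simp; omega
      rw [e3]
      have e4 : tg 1 (tg (j+1) i) = tg (j+1) i + 1 := rfl
      rw [e4]
      have e5 : iter 1 (tg (j+1) i) ((k, mk (tg (j+1) i + 1) (Fin.last M :: L)) : St M)
          = (k + 1, mk (tg (j+1) i + 1) L) := by
        simp only [iter]; exact X_mk_last _ _ _
      rw [e5]
      have e6 : tg (j+1) i + 1 = tg j i := by
        simp only [tg]; rw [tg_succ, f2_two]
      rw [e6]
      exact iter_push j i (k+1) hj L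

lemma altProd_apply {M : ℕ} (n : ℕ) (i j : Fin 2) (h : i ≠ j) (s : St M) :
    (altProd n (XP M i) (XP M j)) s = iter n i s := by
  induction n generalizing i j with
  | zero => rfl
  | succ n ih =>
    simp only [altProd, iter, Equiv.Perm.mul_apply]
    rw [ih j i h.symm, f2_ne h.symm]; rfl

lemma altProd_braid {M : ℕ} (i j : Fin 2) (h : i ≠ j) :
    altProd (M+2) (XP M i) (XP M j) = altProd (M+2) (XP M j) (XP M i) := by
  ext1 s
  rw [altProd_apply _ _ _ h, altProd_apply _ _ _ h.symm]
  rcases s with ⟨k, _ | ⟨e, t, L⟩⟩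
  · have h1 := iter_full (M := M) i k 0 []
    have h2 := iter_full (M := M) j k 0 []
    exact h1.trans h2.symm
  · have h1 := iter_full (M := M) i k e (t :: L)
    have h2 := iter_full (M := M) j k e (t :: L)
    exact h1.trans h2.symm

lemma map_altProd {G H : Type*} [Monoid G] [Monoid H] (f : G →* H) (n : ℕ) (x y : G) :
    f (altProd n x y) = altProd n (f x) (f y) := by
  induction n generalizing x y with
  | zero => simp [altProd]
  | succ n ih => simp [altProd, ih]

def phi (M : ℕ) : DA (M+2) →* Equiv.Perm (St M) :=
  PresentedGroup.toGroup (f := XP M) (by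
    rintro r ⟨i, j, hij, m, hm, rfl⟩
    simp only [DMat, hij, if_false] at hm
    have hm' : m = M + 2 := by exact_mod_cast hm.symm
    subst hm'
    rw [map_mul, map_inv, map_altProd, map_altProd]
    simp only [FreeGroup.lift_apply_of]
    rw [altProd_braid i j hij, mul_inv_cancel])

lemma phi_gen (M : ℕ) (i : Fin 2) : phi M (gen 2 (DMat (M+2)) i) = XP M i := by
  simp [phi, gen]

/-! ### The potential -/
def wt (T : ℕ) (j : ℕ) : ℤ := min ((j : ℤ) + 1) (2 * T - (j + 1))

def F {M : ℕ} (T : ℕ) : St M → ℤ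
  | (k, none) => -(((M : ℤ) + 2) - 2 * T) * k
  | (k, some (_, j, L)) => -(((M : ℤ) + 2) - 2 * T) * k + (wt T j + (L.map fun j : Fin (M+1) => wt T j).sum)

lemma F_mk {M : ℕ} (T : ℕ) (k : ℤ) (e : Fin 2) (L : List (Fin (M+1))) :
    F T (k, mk e L) = -(((M : ℤ) + 2) - 2 * T) * k + (L.map fun j : Fin (M+1) => wt T j).sum := by
  cases L <;> simp [F, mk]

lemma F_X {M : ℕ} (T : ℕ) (hT : 1 ≤ T) (hT2 : T ≤ M + 1) (i : Fin 2) (s : St M) :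
    F T (X i s) ≤ F T s + 1 ∧ F T s ≤ F T (X i s) + 1 := by
  rcases st_casesX i s with ⟨k, L, rfl⟩ | ⟨k, L, rfl⟩ | ⟨k, j, L, hj, rfl⟩
  · rw [X_mk_same, F_mk, F_mk]
    have : wt T 0 = 1 := by unfold wt; simp; omega
    simp [this]
    constructor <;> linarith
  · rw [X_mk_last, F_mk, F_mk]
    have : wt T M = 2 * T - (M + 1) := by unfold wt; simp; omega
    simp [this]
    constructor <;> ring_nf <;> omega
  · rw [X_mk_inc _ _ _ hj, F_mk, F_mk]
    simp only [List.map_cons, List.sum_cons, fin_add_val hj]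
    have : wt T (j+1) ≤ wt T j + 1 ∧ wt T j ≤ wt T (j+1) + 1 := by
      unfold wt; push_cast; omega
    omega

lemma F_Y {M : ℕ} (T : ℕ) (hT : 1 ≤ T) (hT2 : T ≤ M + 1) (i : Fin 2) (s : St M) :
    F T (Y i s) ≤ F T s + 1 := by
  have := (F_X T hT hT2 i (Y i s)).2
  rwa [XY] at this

lemma F_lower {M : ℕ} (T : ℕ) (hT : 1 ≤ T) (hT2 : T ≤ M + 1) (v : List (DA (M+2)))
    (hv : ∀ a ∈ v, a ∈ genSet 2 (DMat (M+2))) :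
    F T (phi M v.prod (0, none)) ≤ v.length := by
  induction v with
  | nil => simp [F]
  | cons a v ih =>
    have h1 := ih (fun b hb => hv b (by simp [hb]))
    rw [List.prod_cons, map_mul, Equiv.Perm.mul_apply]
    have h2 : F T (phi M a (phi M v.prod (0, none))) ≤ F T (phi M v.prod (0, none)) + 1 := by
      obtain ⟨i, rfl | rfl⟩ := hv a (by simp)
      · rw [phi_gen]; exact (F_X T hT hT2 i _).1
      · rw [map_inv, phi_gen]; exact F_Y T hT hT2 i _
    push_cast [List.length_cons]
    omega

/-- alternating word of sign `s` -/
def Alt (s : Bool) (u : List L2) : Prop :=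
  (∀ l ∈ u, l.2 = s) ∧ List.IsChain (fun p q => p.1 ≠ q.1) u

lemma wElt_cons (m : ℕ) (b : L2) (w : List L2) : wElt m (b :: w) = toGen2 m b * wElt m w := by
  simp [wElt]

lemma phi_true (M : ℕ) (i : Fin 2) (s : St M) : phi M (toGen2 (M+2) (i, true)) s = X i s := by
  simp [toGen2, phi_gen]; rfl

lemma phi_false (M : ℕ) (i : Fin 2) (s : St M) : phi M (toGen2 (M+2) (i, false)) s = Y i s := by
  simp [toGen2, phi_gen]; rfl

/-- description of the state reached by a word with bounded runs -/
def Desc (M T : ℕ) (w : List L2) (s : St M) : Prop :=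
  F T s = w.length ∧
  ((w = [] ∧ s.2 = none) ∨
   (∃ (a : Fin 2) (w' u : List L2) (j : Fin (M+1)) (L : List (Fin (M+1))),
      w = (a, true) :: w' ∧ Alt true ((a, true) :: u) ∧ ((a, true) :: u) <+: w ∧
      s.2 = mk a (j :: L) ∧ (j : ℕ) = u.length) ∨
   (∃ (a : Fin 2) (w' u : List L2) (j : Fin (M+1)) (L : List (Fin (M+1))),
      w = (a, false) :: w' ∧ Alt false ((a, false) :: u) ∧ ((a, false) :: u) <+: w ∧
      s.2 = mk (a+1) (j :: L) ∧ (j : ℕ) + u.length = M))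

lemma Alt_single (b : L2) : Alt b.2 [b] := ⟨by simp, by simp⟩

lemma Desc_push_true (M T : ℕ) (hT : 1 ≤ T) (i : Fin 2) (w : List L2) (k : ℤ) (L : List (Fin (M+1)))
    (hF : F T (k, mk i L) = w.length) : Desc M T ((i, true) :: w) (X i (k, mk i L)) := by
  rw [X_mk_same]
  refine ⟨?_, Or.inr (Or.inl ⟨i, w, [], 0, L, rfl, Alt_single _, by simp, rfl, rfl⟩)⟩
  rw [F_mk] at hF ⊢
  have : wt T 0 = 1 := by unfold wt; simp; omega
  simp [this]
  linarith

lemma Desc_push_false (M T : ℕ) (hT2 : T ≤ M + 1) (i : Fin 2) (w : List L2) (k : ℤ)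
    (L : List (Fin (M+1)))
    (hF : F T (k, mk (i+1) L) = w.length) : Desc M T ((i, false) :: w) (Y i (k, mk (i+1) L)) := by
  rw [Y_mk_ne]
  refine ⟨?_, Or.inr (Or.inr ⟨i, w, [], Fin.last M, L, rfl, Alt_single _, by simp, rfl, by simp⟩)⟩
  rw [F_mk] at hF ⊢
  have : wt T M = 2 * T - (M + 1) := by unfold wt; simp; omega
  simp [this]
  linarith

lemma Alt_cons {s : Bool} {a b : Fin 2} {u : List L2} (h : Alt s ((a, s) :: u)) (hab : b ≠ a) :
    Alt s ((b, s) :: (a, s) :: u) := by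
  refine ⟨?_, ?_⟩
  · intro l hl
    rcases List.mem_cons.1 hl with rfl | hl
    · rfl
    · exact h.1 l hl
  · exact List.isChain_cons_cons.2 ⟨hab, h.2⟩

lemma desc (M T : ℕ) (hT : 1 ≤ T) (hT2 : T ≤ M + 1) (w : List L2) (hred : Reduced w)
    (hp : ∀ u, u <:+: w → Alt true u → u.length ≤ T)
    (hn : ∀ u, u <:+: w → Alt false u → u.length ≤ M + 2 - T) :
    Desc M T w (phi M (wElt (M+2) w) (0, none)) := by
  induction w with
  | nil => exact ⟨by simp [wElt, F], Or.inl ⟨rfl, by simp [wElt]⟩⟩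
  | cons b w ih =>
    have hr2 : Reduced w := List.IsChain.tail hred
    specialize ih hr2 (fun u hu => hp u (hu.trans (List.suffix_cons b w).isInfix))
      (fun u hu => hn u (hu.trans (List.suffix_cons b w).isInfix))
    rw [wElt_cons, map_mul, Equiv.Perm.mul_apply]
    generalize phi M (wElt (M+2) w) (0, none) = s at ih
    obtain ⟨k, s2⟩ := s
    obtain ⟨hF, ⟨rfl, hs⟩ | ⟨a, w', u, j, L, rfl, ha, hpre, hs, hj⟩ |
      ⟨a, w', u, j, L, rfl, ha, hpre, hs, hj⟩⟩ := ih
    · obtain ⟨i, _ | _⟩ := b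
      · rw [phi_false]
        have : s2 = mk (i+1) [] := hs
        subst this
        exact Desc_push_false M T hT2 i [] k [] hF
      · rw [phi_true]
        have : s2 = mk i [] := hs
        subst this
        exact Desc_push_true M T hT i [] k [] hF
    · have hs' : s2 = mk a (j :: L) := hs
      subst hs'
      have hba : (a, true) ≠ linv b := (List.isChain_cons_cons.1 hred).1
      obtain ⟨i, _ | _⟩ := b
      · rw [phi_false]
        have : a = i + 1 := f2_ne (by rintro rfl; exact hba rfl)
        subst this
        exact Desc_push_false M T hT2 i _ k _ hF
      · rw [phi_true]
        by_cases hai : a = i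
        · subst hai; exact Desc_push_true M T hT a _ k _ hF
        · have hA := Alt_cons ha (Ne.symm hai)
          have hP : ((i, true) :: (a, true) :: u) <+: ((i, true) :: (a, true) :: w') :=
            (List.prefix_cons_inj _).2 hpre
          have hl := hp _ hP.isInfix hA
          simp at hl
          have : a = i + 1 := f2_ne hai
          subst this
          have hjl : j ≠ Fin.last M := by
            rintro rfl; simp at hj; omega
          rw [X_mk_inc _ _ _ hjl]
          refine ⟨?_, Or.inr (Or.inl ⟨i, _, _, _, _, rfl, hA, hP, rfl, ?_⟩)⟩
          · rw [F_mk] at hF ⊢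
            simp only [List.map_cons, List.sum_cons, fin_add_val hjl] at hF ⊢
            have : wt T (j+1) = wt T j + 1 := by unfold wt; push_cast; omega
            rw [this]; push_cast [List.length_cons] at hF ⊢; linarith
          · rw [fin_add_val hjl, hj]; simp
    · have hs' : s2 = mk (a+1) (j :: L) := hs
      subst hs'
      have hba : (a, false) ≠ linv b := (List.isChain_cons_cons.1 hred).1
      obtain ⟨i, _ | _⟩ := b
      · rw [phi_false]
        by_cases hai : a = i
        · subst hai; exact Desc_push_false M T hT2 a _ k _ hF
        · have hA := Alt_cons ha (Ne.symm hai)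
          have hP : ((i, false) :: (a, false) :: u) <+: ((i, false) :: (a, false) :: w') :=
            (List.prefix_cons_inj _).2 hpre
          have hl := hn _ hP.isInfix hA
          simp at hl
          have : a = i + 1 := f2_ne hai
          subst this
          have hj0 : j ≠ 0 := by
            rintro rfl; simp at hj; omega
          rw [f2_two] at hF ⊢
          rw [Y_mk_dec _ _ _ hj0]
          have hj1 := fin_ne_zero hj0
          refine ⟨?_, Or.inr (Or.inr ⟨i, _, _, _, _, rfl, hA, hP, rfl, ?_⟩)⟩
          · rw [F_mk] at hF ⊢
            simp only [List.map_cons, List.sum_cons, fin_sub_val hj0] at hF ⊢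
            have : wt T (j-1) = wt T j + 1 := by unfold wt; omega
            rw [this]; push_cast [List.length_cons] at hF ⊢; linarith
          · rw [fin_sub_val hj0]; simp; omega
      · rw [phi_true]
        have : a + 1 = i := by
          have : a = i + 1 := f2_ne (by rintro rfl; exact hba rfl)
          rw [this, f2_two]
        subst this
        exact Desc_push_true M T hT _ _ k _ hF

lemma geo_of_bound (M T : ℕ) (hT : 1 ≤ T) (hT2 : T ≤ M + 1) (w : List L2) (hred : Reduced w)
    (hp : ∀ u, u <:+: w → Alt true u → u.length ≤ T)
    (hn : ∀ u, u <:+: w → Alt false u → u.length ≤ M + 2 - T) : Geo (M+2) w := by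
  have hF := (desc M T hT hT2 w hred hp hn).1
  unfold Geo wordLength
  have hmem : w.length ∈ {N : ℕ | ∃ v : List (DA (M+2)), (∀ a ∈ v, a ∈ genSet 2 (DMat (M+2))) ∧
      v.length = N ∧ v.prod = wElt (M+2) w} := by
    refine ⟨w.map (toGen2 (M+2)), ?_, by simp, rfl⟩
    intro a ha
    obtain ⟨l, -, rfl⟩ := List.mem_map.1 ha
    refine ⟨l.1, ?_⟩
    rcases l with ⟨i, _ | _⟩ <;> simp [toGen2]
  apply le_antisymm (Nat.sInf_le hmem)
  obtain ⟨v, hv, hlen, hprod⟩ := Nat.sInf_mem ⟨_, hmem⟩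
  rw [← hlen]
  have := F_lower T hT hT2 v hv
  rw [hprod, hF] at this
  exact_mod_cast this

/-! ### Letters and blocks -/
def o (l : L2) : L2 := (l.1 + 1, l.2)
def fl (l : L2) : L2 := (l.1 + 1, !l.2)
def Clean (c d : L2) : Prop := (c.1 = d.1 ↔ c.2 = d.2)
instance (c d : L2) : Decidable (Clean c d) := by unfold Clean; infer_instance
def CB (A B : List L2) : Prop := ∀ c d, A.getLast? = some c → B.head? = some d → Clean c d
def lst (n : ℕ) (x : L2) : L2 := if n % 2 = 1 then x else o x

lemma o_o (x : L2) : o (o x) = x := by revert x; decide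
lemma fl_fl (x : L2) : fl (fl x) = x := by revert x; decide
lemma fl_o (x : L2) : fl (o x) = o (fl x) := by revert x; decide
lemma clean_ne {c d : L2} (h : Clean c d) : d ≠ linv c := by revert c d; decide
lemma o_ne (x : L2) : o x ≠ linv x := by revert x; decide
lemma fl_linv (x : L2) : fl x = linv (o x) := by revert x; decide
lemma fl_sign {x t : L2} (h : x.2 ≠ t.2) : (fl x).2 = t.2 := by revert x t; decide
lemma o_eq {x y : L2} (h : x.2 = y.2) (h2 : x.1 ≠ y.1) : y = o x := by
  revert x y; decide

lemma lst_succ (n : ℕ) (x : L2) : lst (n+1) x = lst n (o x) := by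
  unfold lst
  rcases Nat.mod_two_eq_zero_or_one n with h | h
  · have : (n+1) % 2 = 1 := by omega
    simp [h, this, o_o]
  · have : (n+1) % 2 = 0 := by omega
    simp [h, this]

lemma lst_lst (n : ℕ) (x : L2) : lst n (lst n x) = x := by
  unfold lst; split_ifs <;> simp [o_o]

lemma lst_o (n : ℕ) (x : L2) : lst n (o x) = o (lst n x) := by
  unfold lst; split_ifs <;> simp

lemma lst_two (n : ℕ) (x : L2) : (lst n x).2 = x.2 := by
  unfold lst; split_ifs <;> simp [o]

lemma altL_len (n : ℕ) (x y : L2) : (altL n x y).length = n := by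
  induction n generalizing x y with
  | zero => rfl
  | succ n ih => simp [altL, ih]

lemma altL_snoc (n : ℕ) (x : L2) : altL (n+1) x (o x) = altL n x (o x) ++ [lst (n+1) x] := by
  induction n generalizing x with
  | zero => rfl
  | succ n ih =>
    have := ih (o x)
    rw [o_o] at this
    rw [altL, this, lst_succ (n+1) x]
    rfl

lemma altE_eq (n : ℕ) (x : L2) : altE n x (o x) = altL n (lst n x) (o (lst n x)) := by
  induction n generalizing x with
  | zero => rfl
  | succ n ih =>
    have := ih (o x)
    rw [o_o] at this
    have h2 := altL_snoc n (lst (n+1) x)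
    rw [lst_lst] at h2
    rw [h2]
    unfold altE at *
    rw [altL, List.reverse_cons, this, lst_succ]

lemma altL_eq_altE (n : ℕ) (x : L2) : altL n x (o x) = altE n (lst n x) (o (lst n x)) := by
  rw [altE_eq, lst_lst]

lemma altL_head (n : ℕ) (hn : 0 < n) (x : L2) : (altL n x (o x)).head? = some x := by
  cases n with
  | zero => omega
  | succ n => simp [altL]

lemma altL_last (n : ℕ) (hn : 0 < n) (x : L2) : (altL n x (o x)).getLast? = some (lst n x) := by
  cases n with
  | zero => omega
  | succ n => rw [altL_snoc]; simp

lemma altE_head (n : ℕ) (hn : 0 < n) (x : L2) : (altE n x (o x)).head? = some (lst n x) := by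
  rw [altE_eq, altL_head n hn]

lemma altE_last (n : ℕ) (hn : 0 < n) (x : L2) : (altE n x (o x)).getLast? = some x := by
  rw [altE_eq, altL_last n hn, lst_lst]

lemma altL_mem (n : ℕ) (x l : L2) (h : l ∈ altL n x (o x)) : l.2 = x.2 := by
  induction n generalizing x with
  | zero => simp [altL] at h
  | succ n ih =>
    rcases List.mem_cons.1 h with rfl | h
    · rfl
    · have := ih (o x) (by rw [o_o]; exact h)
      exact this

lemma Alt_eq (s : Bool) (u : List L2) (h : Alt s u) (hu : u ≠ []) :
    ∃ x : L2, x.2 = s ∧ u = altL u.length x (o x) := by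
  induction u with
  | nil => exact absurd rfl hu
  | cons a u ih =>
    refine ⟨a, h.1 a (by simp), ?_⟩
    cases u with
    | nil => rfl
    | cons b u =>
      obtain ⟨x, hx, e⟩ := ih ⟨fun l hl => h.1 l (by simp [hl]), h.2.tail⟩ (by simp)
      have hb : b = x := by
        have := congrArg List.head? e
        rw [altL_head _ (by simp)] at this
        simpa using this
      subst hb
      have : b = o a := o_eq (by rw [hx]; exact h.1 a (by simp)) (List.isChain_cons_cons.1 h.2).1
      subst this
      rw [o_o] at e
      rw [List.length_cons, altL, ← e]

lemma lst_dmap (m p : ℕ) (hp : p < m) (x : L2) :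
    lst (m - p) (fl x) = dmap m (fl (lst p x)) := by
  unfold lst dmap
  rcases Nat.mod_two_eq_zero_or_one m with h | h <;>
  rcases Nat.mod_two_eq_zero_or_one p with h' | h'
  · have : (m - p) % 2 = 0 := by omega
    simp [h, h', this]; revert x; decide
  · have : (m - p) % 2 = 1 := by omega
    simp [h, h', this]
  · have : (m - p) % 2 = 1 := by omega
    simp [h, h', this]; revert x; decide
  · have : (m - p) % 2 = 0 := by omega
    simp [h, h', this]; revert x; decide

lemma dmap_dmap (m : ℕ) (l : L2) : dmap m (dmap m l) = l := by
  unfold dmap; split_ifs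
  · rfl
  · revert l; decide

lemma clean_dmap (m : ℕ) (c d : L2) : Clean (dmap m c) (dmap m d) ↔ Clean c d := by
  unfold dmap; split_ifs
  · rfl
  · revert c d; decide

lemma clean_fl_left (c d : L2) : Clean (fl c) d ↔ Clean c d := by revert c d; decide
lemma clean_fl_right (c d : L2) : Clean c (fl d) ↔ Clean c d := by revert c d; decide

/-! ### Bounded runs -/
def BR (bd : Bool → ℕ) (w : List L2) : Prop :=
  Reduced w ∧ ∀ s u, u <:+: w → Alt s u → u.length ≤ bd s

lemma cut {A B u : List L2} {s : Bool} (h : CB A B) (hu : u <:+: A ++ B) (ha : Alt s u) :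
    u <:+: A ∨ u <:+: B := by
  rw [List.infix_append_iff] at hu
  rcases hu with hu | hu | ⟨u1, u2, rfl, h1, h2⟩
  · exact Or.inl hu
  · exact Or.inr hu
  · rcases List.eq_nil_or_concat u1 with rfl | ⟨v1, c, rfl⟩
    · right; simpa using h2.isInfix
    · cases u2 with
      | nil => left; simpa using h1.isInfix
      | cons d v2 =>
        exfalso
        obtain ⟨A', rfl⟩ := h1
        obtain ⟨B', rfl⟩ := h2
        have hc := h c d (by simp) (by simp)
        have e1 : c.2 = s := ha.1 c (by simp)
        have e2 : d.2 = s := ha.1 d (by simp)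
        have := (List.isChain_append.1 ha.2).2.2 c (by simp) d (by simp)
        exact this (hc.2 (by rw [e1, e2]))

lemma glue {bd : Bool → ℕ} {A B : List L2} (hA : BR bd A) (hB : BR bd B) (h : CB A B) :
    BR bd (A ++ B) := by
  refine ⟨List.isChain_append.2 ⟨hA.1, hB.1, ?_⟩, ?_⟩
  · intro c hc d hd
    have := h c d hc hd
    exact clean_ne this
  · intro s u hu ha
    rcases cut h hu ha with h1 | h1
    · exact hA.2 s u h1 ha
    · exact hB.2 s u h1 ha

lemma BR.infix {bd : Bool → ℕ} {A B : List L2} (hB : BR bd B) (h : A <:+: B) : BR bd A :=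
  ⟨List.IsChain.infix hB.1 h, fun s u hu ha => hB.2 s u (hu.trans h) ha⟩

lemma BR_altL {bd : Bool → ℕ} (n : ℕ) (x : L2) (h : n ≤ bd x.2) : BR bd (altL n x (o x)) := by
  constructor
  · clear h
    induction n generalizing x with
    | zero => exact List.isChain_nil
    | succ n ih =>
      have := ih (o x)
      rw [o_o] at this
      cases n with
      | zero => exact List.isChain_singleton _
      | succ n =>
        exact List.isChain_cons_cons.2 ⟨o_ne x, this⟩
  · intro s u hu ha
    cases u with
    | nil => simp
    | cons a u =>
      have h1 : a.2 = s := ha.1 a (by simp)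
      have h2 : a.2 = x.2 := altL_mem n x a (hu.subset (by simp))
      rw [← h1, h2]
      have := hu.length_le
      rw [altL_len] at this
      omega

lemma Alt_dmap (m : ℕ) {s : Bool} {u : List L2} (h : Alt s u) : Alt s (u.map (dmap m)) := by
  refine ⟨?_, ?_⟩
  · intro l hl
    obtain ⟨l', h', rfl⟩ := List.mem_map.1 hl
    rw [← h.1 l' h']
    unfold dmap; split_ifs <;> rfl
  · rw [List.isChain_map]
    refine h.2.imp ?_
    intro a b hab
    unfold dmap; split_ifs
    · exact hab
    · simpa using hab

lemma map_dmap_dmap (m : ℕ) (u : List L2) : (u.map (dmap m)).map (dmap m) = u := by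
  rw [List.map_map]
  conv_rhs => rw [← List.map_id u]
  congr 1
  funext l; exact dmap_dmap m l

lemma BR_dmap {bd : Bool → ℕ} (m : ℕ) {A : List L2} (h : BR bd A) : BR bd (A.map (dmap m)) := by
  constructor
  · unfold Reduced
    show List.IsChain _ _
    rw [List.isChain_map]
    refine List.IsChain.imp ?_ h.1
    intro a b hab
    unfold dmap; split_ifs
    · exact hab
    · revert a b; decide
  · intro s u hu ha
    have h1 : u.map (dmap m) <:+: A := by
      have := hu.map (dmap m)
      rwa [map_dmap_dmap] at this
    simpa using h.2 s _ h1 (Alt_dmap m ha)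

/-! ### Group computations -/
lemma wElt_append (m : ℕ) (u v : List L2) : wElt m (u ++ v) = wElt m u * wElt m v := by
  simp [wElt]

lemma wElt_altL (m n : ℕ) (x y : L2) : wElt m (altL n x y) = altProd n (toGen2 m x) (toGen2 m y) := by
  induction n generalizing x y with
  | zero => simp [altL, altProd, wElt]
  | succ n ih => rw [altL, wElt_cons, ih]; rfl

lemma gen_braid (m : ℕ) (i j : Fin 2) (h : i ≠ j) :
    altProd m (gen 2 (DMat m) i) (gen 2 (DMat m) j) =
    altProd m (gen 2 (DMat m) j) (gen 2 (DMat m) i) := by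
  have hr : altProd m (FreeGroup.of i) (FreeGroup.of j) *
      (altProd m (FreeGroup.of j) (FreeGroup.of i))⁻¹ ∈ artinRels 2 (DMat m) :=
    ⟨i, j, h, m, by simp [DMat, h], rfl⟩
  have h1 := PresentedGroup.one_of_mem hr
  rw [map_mul, map_inv, map_altProd, map_altProd] at h1
  exact mul_inv_eq_one.1 h1

def Dl (m : ℕ) : DA m := wElt m (altL m (0, true) (1, true))

lemma Dl_eq (m : ℕ) (x : L2) (hx : x.2 = true) : wElt m (altL m x (o x)) = Dl m := by
  obtain ⟨i, s⟩ := x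
  simp only at hx
  subst hx
  unfold Dl
  rw [wElt_altL, wElt_altL]
  fin_cases i
  · rfl
  · exact gen_braid m 1 0 (by decide)

lemma toGen2_linv (m : ℕ) (a : L2) : toGen2 m (linv a) = (toGen2 m a)⁻¹ := by
  rcases a with ⟨i, _ | _⟩ <;> simp [toGen2, linv]

lemma lst_dmap' (m : ℕ) (x : L2) : lst (m+1) x = dmap m x := by
  unfold lst dmap
  rcases Nat.mod_two_eq_zero_or_one m with h | h
  · have : (m + 1) % 2 = 1 := by omega
    simp [h, this]
  · have : (m + 1) % 2 = 0 := by omega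
    simp [h, this, o]

lemma gen_Dl (m : ℕ) (a : L2) : toGen2 m a * Dl m = Dl m * toGen2 m (dmap m a) := by
  have pos : ∀ a : L2, a.2 = true → toGen2 m a * Dl m = Dl m * toGen2 m (dmap m a) := by
    intro a ha
    have h1 := altL_snoc m a
    rw [altL] at h1
    have h2 := congrArg (wElt m) h1
    have h3 := Dl_eq m (o a) ha
    rw [o_o] at h3
    rw [wElt_cons, wElt_append, h3, Dl_eq m a ha, lst_dmap'] at h2
    rw [h2]; simp [wElt]
  by_cases ha : a.2 = true
  · exact pos a ha
  · have h1 := pos (linv a) (by simpa [linv] using ha)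
    have h2 : dmap m (linv a) = linv (dmap m a) := by
      unfold dmap linv; split_ifs <;> rfl
    rw [h2, toGen2_linv, toGen2_linv] at h1
    rw [inv_mul_eq_iff_eq_mul, ← mul_assoc, eq_mul_inv_iff_mul_eq] at h1
    exact h1.symm

lemma word_Dl (m : ℕ) (u : List L2) : wElt m u * Dl m = Dl m * wElt m (u.map (dmap m)) := by
  induction u with
  | nil => simp [wElt]
  | cons a u ih =>
    rw [List.map_cons, wElt_cons, wElt_cons, mul_assoc, ih, ← mul_assoc, gen_Dl, mul_assoc]

lemma L1 (m q p : ℕ) (x : L2) (hx : x.2 = true) (h : p + q = m) :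
    wElt m (altL q (fl x) (o (fl x))) * Dl m = wElt m (altL p x (o x)) := by
  induction q generalizing p x with
  | zero =>
    have : p = m := by omega
    subst this
    rw [Dl_eq p x hx]; simp [altL, wElt]
  | succ q ih =>
    have h1 := ih (p+1) (o x) hx (by omega)
    rw [o_o, fl_o, o_o] at h1
    rw [altL, wElt_cons, mul_assoc, h1, altL, wElt_cons]
    have : fl x = linv (o x) := fl_linv x
    rw [this, toGen2_linv, inv_mul_cancel_left]

lemma altE_snoc (n : ℕ) (x y : L2) : altE (n+1) x y = altE n y x ++ [x] := by
  simp [altE, altL]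

lemma L2' (m q p : ℕ) (x : L2) (hx : x.2 = true) (h : p + q = m) :
    Dl m * wElt m (altE q (fl x) (o (fl x))) = wElt m (altE p x (o x)) := by
  induction q generalizing p x with
  | zero =>
    have : p = m := by omega
    subst this
    rw [altE_eq p x, Dl_eq p _ (by rw [lst_two]; exact hx)]; simp [altE, altL, wElt]
  | succ q ih =>
    have h1 := ih (p+1) (o x) hx (by omega)
    rw [o_o, fl_o, o_o] at h1
    rw [altE_snoc, wElt_append, ← mul_assoc, h1, altE_snoc, wElt_append, mul_assoc]
    have : fl x = linv (o x) := fl_linv x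
    rw [this]; simp [wElt, toGen2_linv]

lemma move_elt (m p n : ℕ) (hp : p < m) (hn : n < m) (α ξ β : List L2) (x t : L2) (hxt : x.2 ≠ t.2) :
    wElt m (α ++ altL p x (o x) ++ ξ ++ altE n t (o t) ++ β) =
    wElt m (α ++ altL (m - p) (fl x) (o (fl x)) ++ ξ.map (dmap m) ++
      altE (m - n) (fl t) (o (fl t)) ++ β) := by
  simp only [wElt_append]
  congr 1
  simp only [mul_assoc]
  congr 1
  by_cases hx : x.2 = true
  · have ht : t.2 = false := by rw [hx] at hxt; simpa using hxt.symm
    have e1 := L1 m (m - p) p x hx (by omega)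
    have e2 := L2' m n (m - n) (fl t) (by simp [fl, ht]) (by omega)
    rw [fl_fl] at e2
    have e3 := word_Dl m (ξ.map (dmap m))
    rw [map_dmap_dmap] at e3
    rw [← e1, ← e2]
    simp only [mul_assoc]
    rw [← mul_assoc (Dl m) (wElt m ξ), ← e3, mul_assoc]
  · have hx : x.2 = false := by simpa using hx
    have ht : t.2 = true := by rw [hx] at hxt; simpa using hxt.symm
    have e1 := L1 m p (m - p) (fl x) (by simp [fl, hx]) (by omega)
    rw [fl_fl] at e1
    have e2 := L2' m (m - n) n t ht (by omega)
    have e3 := word_Dl m ξ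
    rw [← e1, ← e2]
    simp only [mul_assoc]
    rw [← mul_assoc (wElt m ξ), e3, mul_assoc]

/-! ### The move -/
lemma move_umove (m p n : ℕ) (hp0 : 0 < p) (hp : p < m) (hn0 : 0 < n) (hn : n < m) (hpn : m < p + n)
    (α ξ β : List L2) (x t : L2) (hxt : x.2 ≠ t.2)
    (h1 : CB α (altL p x (o x))) (h2 : CB (altL p x (o x)) (ξ ++ altE n t (o t) ++ β))
    (h3 : CB (α ++ altL p x (o x) ++ ξ) (altE n t (o t))) (h4 : CB (altE n t (o t)) β) :
    UMove m (α ++ altL p x (o x) ++ ξ ++ altE n t (o t) ++ β)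
      (α ++ altL (m - p) (fl x) (o (fl x)) ++ ξ.map (dmap m) ++
      altE (m - n) (fl t) (o (fl t)) ++ β) := by
  have cl : ∀ c d : L2, Clean c d → ∀ s, d.2 = s → ¬ (c.2 = s ∧ c.1 ≠ d.1) := by decide
  have cl' : ∀ c d : L2, Clean c d → ∀ s, c.2 = s → ¬ (d.2 = s ∧ d.1 ≠ c.1) := by decide
  have hL : ∀ d, (altL p x (o x)).getLast? = some d → d.2 = x.2 := by
    intro d hd
    rw [altL_last p hp0] at hd
    cases hd; exact lst_two p x
  have hE : ∀ d, (altE n t (o t)).head? = some d → d.2 = t.2 := by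
    intro d hd
    rw [altE_head n hn0] at hd
    cases hd; exact lst_two n t
  have c1 : ∀ s, x.2 = s → ∀ c, α.getLast? = some c → ¬(c.2 = s ∧ c.1 ≠ x.1) :=
    fun s hs c hc => cl c x (h1 c x hc (altL_head p hp0 x)) s hs
  have c2 : ∀ s, x.2 = s → ∀ c d, (ξ ++ altE n t (o t) ++ β).head? = some c →
        (altL p x (o x)).getLast? = some d → ¬(c.2 = s ∧ c.1 ≠ d.1) :=
    fun s hs c d hc hd => cl' d c (h2 d c hd hc) s ((hL d hd).trans hs)
  have c3 : ∀ s, t.2 = s → ∀ c d, (α ++ altL p x (o x) ++ ξ).getLast? = some c →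
        (altE n t (o t)).head? = some d → ¬(c.2 = s ∧ c.1 ≠ d.1) :=
    fun s hs c d hc hd => cl c d (h3 c d hc hd) s ((hE d hd).trans hs)
  have c4 : ∀ s, t.2 = s → ∀ c, β.head? = some c → ¬(c.2 = s ∧ c.1 ≠ t.1) :=
    fun s hs c hc => cl' t c (h4 t c (altE_last n hn0 t) hc) s hs
  have n2 : ∀ i : Fin 2, i ≠ i + 1 := by decide
  rcases x with ⟨i, s⟩
  rcases t with ⟨j, s'⟩
  cases s <;> cases s' <;> simp only [ne_eq, not_true_eq_false] at hxt
  · right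
    refine ⟨α, β, ξ, n, p, (i, true), (i+1, true), (j+1, true), (j, true), rfl, rfl, rfl, rfl,
      n2 i, (n2 j).symm, hn0, hn, hp0, hp, by omega, rfl, ?_, c1 _ rfl, c2 _ rfl, c3 _ rfl, c4 _ rfl⟩
    simp [fl, o, linv, f2_two]
  · left
    refine ⟨α, β, ξ, p, n, (i, true), (i+1, true), (j+1, true), (j, true), rfl, rfl, rfl, rfl,
      n2 i, (n2 j).symm, hp0, hp, hn0, hn, by omega, rfl, ?_, c1 _ rfl, c2 _ rfl, c3 _ rfl, c4 _ rfl⟩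
    simp [fl, o, linv, f2_two]

lemma move_BR (bd : Bool → ℕ)
    (m p n : ℕ) (hp0 : 0 < p) (hp : p < m) (hn0 : 0 < n) (hn : n < m) (hpn : m < p + n)
    (α ξ β : List L2) (x t : L2) (hxt : x.2 ≠ t.2) (hbx : bd x.2 = p) (hbt : bd t.2 = n)
    (h1 : CB α (altL p x (o x))) (h2 : CB (altL p x (o x)) (ξ ++ altE n t (o t) ++ β))
    (h3 : CB (α ++ altL p x (o x) ++ ξ) (altE n t (o t))) (h4 : CB (altE n t (o t)) β)
    (hw : BR bd (α ++ altL p x (o x) ++ ξ ++ altE n t (o t) ++ β)) :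
    BR bd (α ++ altL (m - p) (fl x) (o (fl x)) ++ ξ.map (dmap m) ++
      altE (m - n) (fl t) (o (fl t)) ++ β) := by
  have hα : BR bd α := hw.infix ⟨[], altL p x (o x) ++ ξ ++ altE n t (o t) ++ β, by simp⟩
  have hξ : BR bd ξ := hw.infix ⟨α ++ altL p x (o x), altE n t (o t) ++ β, by simp⟩
  have hβ : BR bd β := hw.infix ⟨α ++ altL p x (o x) ++ ξ ++ altE n t (o t), [], by simp⟩
  have fx : (fl x).2 = t.2 := fl_sign hxt
  have ft : (fl t).2 = x.2 := fl_sign hxt.symm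
  have hb1 : BR bd (altL (m - p) (fl x) (o (fl x))) := BR_altL _ _ (by rw [fx, hbt]; omega)
  have hb2 : BR bd (altE (m - n) (fl t) (o (fl t))) := by
    rw [altE_eq]; exact BR_altL _ _ (by rw [lst_two, ft, hbx]; omega)
  simp only [List.append_assoc]
  have b1h := altL_head (m - p) (by omega) (fl x)
  have b1l := altL_last (m - p) (by omega) (fl x)
  have b2h := altE_head (m - n) (by omega) (fl t)
  have b2l := altE_last (m - n) (by omega) (fl t)
  rw [lst_dmap m p hp] at b1l
  rw [lst_dmap m n hn] at b2h
  refine glue hα (glue hb1 (glue (BR_dmap m hξ) (glue hb2 hβ ?_) ?_) ?_) ?_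
  · intro c d hc hd
    rw [b2l] at hc; cases hc
    rw [clean_fl_left]
    exact h4 t d (altE_last n hn0 t) hd
  · intro c d hc hd
    rw [List.head?_append, b2h] at hd; cases hd
    rw [List.getLast?_map] at hc
    obtain ⟨c', hc', rfl⟩ := Option.map_eq_some_iff.1 hc
    rw [clean_dmap, clean_fl_right]
    refine h3 c' _ ?_ (altE_head n hn0 t)
    rw [List.getLast?_append, hc']; rfl
  · intro c d hc hd
    rw [b1l] at hc; cases hc
    cases ξ with
    | nil =>
      simp only [List.map_nil, List.nil_append] at hd
      rw [List.head?_append, b2h] at hd; cases hd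
      rw [clean_dmap, clean_fl_right, clean_fl_left]
      refine h2 _ _ (altL_last p hp0 x) ?_
      rw [List.nil_append, List.head?_append, altE_head n hn0]; rfl
    | cons a ξ =>
      simp only [List.map_cons, List.cons_append, List.head?_cons] at hd
      cases hd
      rw [clean_dmap, clean_fl_left]
      exact h2 _ _ (altL_last p hp0 x) (by simp)
  · intro c d hc hd
    rw [List.head?_append, b1h] at hd; cases hd
    rw [clean_fl_right]
    exact h1 c x hc (altL_head p hp0 x)

/-- Cleanness of the boundaries of a longest alternating subword. -/
lemma max_clean {bd : Bool → ℕ} {a u b : List L2} {s : Bool} (hw : BR bd (a ++ u ++ b))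
    (hu : Alt s u) (hl : u.length = bd s) : CB a u ∧ CB u b := by
  have red : ∀ c d : L2, d ≠ linv c → ¬ Clean c d → c.2 = d.2 ∧ c.1 ≠ d.1 := by decide
  constructor
  · intro c d hc hd
    by_contra hcl
    have hr : Reduced (a ++ u) := List.IsChain.infix hw.1 ⟨[], b, by simp⟩
    have h1 := (List.isChain_append.1 hr).2.2 c hc d hd
    obtain ⟨e1, e2⟩ := red c d h1 hcl
    have hds : d.2 = s := hu.1 d (List.mem_of_mem_head? hd)
    have hA : Alt s (c :: u) := by
      refine ⟨?_, ?_⟩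
      · intro l hl
        rcases List.mem_cons.1 hl with rfl | hl
        · rw [e1, hds]
        · exact hu.1 l hl
      · refine List.isChain_cons.2 ⟨?_, hu.2⟩
        intro y hy
        have : y = d := by
          have : some y = some d := by rw [← hd]; exact hy.symm
          simpa using this
        rw [this]; exact e2
    obtain ⟨a', rfl⟩ := List.getLast?_eq_some_iff.1 hc
    have := hw.2 s (c :: u) ⟨a', b, by simp⟩ hA
    simp at this; omega
  · intro c d hc hd
    by_contra hcl
    have hr : Reduced (u ++ b) := List.IsChain.infix hw.1 ⟨a, [], by simp⟩
    have h1 := (List.isChain_append.1 hr).2.2 c hc d hd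
    obtain ⟨e1, e2⟩ := red c d h1 hcl
    have hds : c.2 = s := hu.1 c (List.mem_of_mem_getLast? hc)
    have hA : Alt s (u ++ [d]) := by
      refine ⟨?_, ?_⟩
      · intro l hl
        rcases List.mem_append.1 hl with hl | hl
        · exact hu.1 l hl
        · rw [List.mem_singleton.1 hl, ← e1, hds]
      · refine List.isChain_append.2 ⟨hu.2, by simp, ?_⟩
        intro y hy z hz
        have : y = c := by
          have : some y = some c := by rw [← hc]; exact hy.symm
          simpa using this
        rw [this]
        have : z = d := by simpa using hz.symm
        rw [this]
        exact e2
    obtain ⟨b', rfl⟩ := List.head?_eq_some_iff.1 hd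
    have := hw.2 s (u ++ [d]) ⟨a, b', by simp⟩ hA
    simp at this; omega

def Step (m : ℕ) (bd : Bool → ℕ) (w : List L2) : Prop :=
  ∃ w', UMove m w w' ∧ BR bd w' ∧ wElt m w' = wElt m w ∧ w'.length < w.length

lemma step_aux (m : ℕ) (bd : Bool → ℕ) (s : Bool) (a u b v c : List L2)
    (hbd : ∀ s, 0 < bd s ∧ bd s < m) (hsum : m < bd s + bd (!s))
    (hw : BR bd (a ++ u ++ b ++ v ++ c)) (hu : Alt s u) (hv : Alt (!s) v)
    (hul : u.length = bd s) (hvl : v.length = bd (!s)) : Step m bd (a ++ u ++ b ++ v ++ c) := by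
  obtain ⟨h1, h2⟩ := max_clean (a := a) (u := u) (b := b ++ v ++ c) (by simpa using hw) hu hul
  obtain ⟨h3, h4⟩ := max_clean (a := a ++ u ++ b) (u := v) (b := c) hw hv hvl
  have hup := hbd s
  have hvp := hbd (!s)
  obtain ⟨x, hx, hue⟩ := Alt_eq s u hu (by intro h; rw [h] at hul; simp at hul; omega)
  obtain ⟨t, ht, hve⟩ := Alt_eq (!s) v hv (by intro h; rw [h] at hvl; simp at hvl; omega)
  rw [hul] at hue
  rw [hvl, altL_eq_altE] at hve
  generalize hT : lst (bd (!s)) t = t' at hve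
  have ht' : t'.2 = !s := by rw [← hT, lst_two, ht]
  have hxt : x.2 ≠ t'.2 := by rw [hx, ht']; simp
  subst hue
  subst hve
  refine ⟨_, move_umove m _ _ hup.1 hup.2 hvp.1 hvp.2 hsum a b c x t' hxt h1 h2 h3 h4,
    move_BR bd m _ _ hup.1 hup.2 hvp.1 hvp.2 hsum a b c x t' hxt (by rw [hx]) (by rw [ht'])
      h1 h2 h3 h4 hw, (move_elt m _ _ hup.2 hvp.2 a b c x t' hxt).symm, ?_⟩
  simp [altE, altL_len]
  omega

lemma exists_max (w : List L2) (s : Bool) (B : ℕ)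
    (h : ∀ u, u <:+: w → Alt s u → u.length ≤ B) :
    ∃ P ≤ B, (∀ u, u <:+: w → Alt s u → u.length ≤ P) ∧ ∃ u, u <:+: w ∧ Alt s u ∧ u.length = P := by
  classical
  have hex : ∃ P, ∀ u, u <:+: w → Alt s u → u.length ≤ P := ⟨B, h⟩
  refine ⟨Nat.find hex, Nat.find_min' hex h, Nat.find_spec hex, ?_⟩
  by_cases h0 : Nat.find hex = 0
  · exact ⟨[], List.nil_infix, ⟨by simp, by simp⟩, by simp [h0]⟩
  · have := Nat.find_min hex (m := Nat.find hex - 1) (by omega)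
    push Not at this
    obtain ⟨u, h1, h2, h3⟩ := this
    have := Nat.find_spec hex u h1 h2
    exact ⟨u, h1, h2, by omega⟩

lemma geo_or_step (M : ℕ) (w : List L2) (hw : BR (fun _ => M + 1) w) :
    Geo (M+2) w ∨ ∃ w', UMove (M+2) w w' ∧ BR (fun _ => M + 1) w' ∧
      wElt (M+2) w' = wElt (M+2) w ∧ w'.length < w.length := by
  obtain ⟨P, hPM, hP, u, huw, hu, hul⟩ := exists_max w true (M+1) (hw.2 true)
  obtain ⟨N, hNM, hN, v, hvw, hv, hvl⟩ := exists_max w false (M+1) (hw.2 false)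
  by_cases hP0 : P = 0
  · left
    refine geo_of_bound M 1 le_rfl (by omega) w hw.1 (fun u h h' => ?_) (fun u h h' => ?_)
    · have := hP u h h'; omega
    · have := hN u h h'; omega
  by_cases hPN : P + N ≤ M + 2
  · left
    refine geo_of_bound M P (by omega) (by omega) w hw.1 (fun u h h' => ?_) (fun u h h' => ?_)
    · have := hP u h h'; omega
    · have := hN u h h'; omega
  right
  let bd : Bool → ℕ := fun s => if s then P else N
  have hbd : ∀ s, 0 < bd s ∧ bd s < M + 2 := by
    intro s; cases s <;> simp [bd] <;> omega
  have hwb : BR bd w := by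
    refine ⟨hw.1, ?_⟩
    intro s; cases s
    · exact hN
    · exact hP
  suffices hS : Step (M+2) bd w by
    obtain ⟨w', k1, k2, k3, k4⟩ := hS
    refine ⟨w', k1, ⟨k2.1, fun s u h1 h2 => ?_⟩, k3, k4⟩
    have := k2.2 s u h1 h2
    have := hbd s
    show _ ≤ M + 1
    omega
  obtain ⟨a, b, rfl⟩ := huw
  obtain ⟨c1, c2⟩ := max_clean hwb hu hul
  have hv0 : v ≠ [] := by intro h; rw [h] at hvl; simp at hvl; omega
  have c1' : CB a (u ++ b) := by
    intro c d hc hd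
    refine c1 c d hc ?_
    cases u with
    | nil => simp at hul; omega
    | cons e u => simpa using hd
  rw [List.append_assoc] at hvw
  rcases cut c1' hvw hv with h | h
  · obtain ⟨a1, a2, rfl⟩ := h
    refine step_aux (M+2) bd false a1 v a2 u b hbd ?_ hwb hv hu hvl hul
    simp [bd]; omega
  · rcases cut c2 h hv with h | h
    · exfalso
      cases v with
      | nil => exact hv0 rfl
      | cons d v =>
        have e1 := hv.1 d (by simp)
        have e2 := hu.1 d (h.subset (by simp))
        rw [e1] at e2; cases e2
    · obtain ⟨b1, b2, rfl⟩ := h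
      have := step_aux (M+2) bd true a u b1 v b2 hbd (by simp [bd]; omega) (by simpa using hwb) hu hv hul hvl
      simpa using this

lemma main_aux (M : ℕ) (n : ℕ) (w : List L2) (hn : w.length ≤ n) (hw : BR (fun _ => M + 1) w) :
    ∃ (t : ℕ) (f : ℕ → List L2), f 0 = w ∧
      (∀ i < t, UMove (M+2) (f i) (f (i + 1))) ∧
      (∀ i ≤ t, Reduced (f i) ∧ wElt (M+2) (f i) = wElt (M+2) w) ∧
      Geo (M+2) (f t) := by
  induction n generalizing w with
  | zero =>
    rcases geo_or_step M w hw with h | ⟨w', _, _, _, h4⟩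
    · exact ⟨0, fun _ => w, rfl, by simp, fun _ _ => ⟨hw.1, rfl⟩, h⟩
    · omega
  | succ n ih =>
    rcases geo_or_step M w hw with h | ⟨w', h1, h2, h3, h4⟩
    · exact ⟨0, fun _ => w, rfl, by simp, fun _ _ => ⟨hw.1, rfl⟩, h⟩
    · obtain ⟨t, f, f0, f1, f2, f3⟩ := ih w' (by omega) h2
      refine ⟨t + 1, fun i => match i with | 0 => w | i + 1 => f i, rfl, ?_, ?_, f3⟩
      · intro i hi
        cases i with
        | zero => show UMove _ w (f 0); rw [f0]; exact h1
        | succ i => exact f1 i (by omega)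
      · intro i hi
        cases i with
        | zero => exact ⟨hw.1, rfl⟩
        | succ i => 
          have := f2 i (by omega)
          exact ⟨this.1, this.2.trans h3⟩

/-- **Lemma.** A freely reduced word `w` with `0 < p(w) < m` and `0 < n(w) < m` can be
reduced to a geodesic word by a sequence of unsigned length-reducing `τ`-moves alone;
in particular all intermediate words are freely reduced and represent the same
element of `DA(m)` as `w`. -/
theorem reduce_by_unsigned_moves
    (m : ℕ) (hm : 2 ≤ m) (w : List L2)
    (hred : Reduced w)
    (hp0 : ∃ l ∈ w, l.2 = true)
    (hpm : ∀ u : List L2, u <:+: w → PosAlt u → u.length < m)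
    (hn0 : ∃ l ∈ w, l.2 = false)
    (hnm : ∀ u : List L2, u <:+: w → NegAlt u → u.length < m) :
    ∃ (t : ℕ) (f : ℕ → List L2), f 0 = w ∧
      (∀ i < t, UMove m (f i) (f (i + 1))) ∧
      (∀ i ≤ t, Reduced (f i) ∧ wElt m (f i) = wElt m w) ∧
      Geo m (f t) := by
  obtain ⟨M, rfl⟩ : ∃ M, m = M + 2 := ⟨m - 2, by omega⟩
  refine main_aux M w.length w le_rfl ⟨hred, ?_⟩
  intro s u hu ha
  cases s
  · exact Nat.lt_succ_iff.1 (hnm u hu ha)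
  · exact Nat.lt_succ_iff.1 (hpm u hu ha)


end ArtinRD
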